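/- Assume dom f ≠ ∅ and P = ℝⁿ × ℝˢ, let p ∈ [1,∞), let (Ω,𝓕,ℙ) be atomless, let 𝓡 : L^p(Ω,𝓕,ℙ) → ℝ be law-invariant, convex and nondecreasing, let X ⊆ ℝⁿ be a nonempty polyhedron, and let 𝓜 ⊆ 𝓜^p_s be locally uniformly ‖·‖^p-integrating. Then the global optimal value function φ_{ℝⁿ}(μ) := inf { Q_𝓡(x,μ) : x ∈ X }, restricted to 𝓜, is upper semicontinuous with respect to the topology of weak convergence of probability measures. -/

import Mathlib

open MeasureTheory Matrix Set Topology Filter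
open scoped ENNReal NNReal

noncomputable section

/-- Feasible set of the lower level problem: `{ y | A y ≤ T x + z }`. -/
def LowerFeas {n m s : ℕ} (A : Matrix (Fin s) (Fin m) ℝ) (T : Matrix (Fin s) (Fin n) ℝ)
    (x : Fin n → ℝ) (z : Fin s → ℝ) : Set (Fin m → ℝ) :=
  {y | A.mulVec y ≤ T.mulVec x + z}

/-- Lower level optimal solution set `Ψ(x,z) = Argmin { dᵀy | A y ≤ T x + z }`. -/
def Psi {n m s : ℕ} (d : Fin m → ℝ) (A : Matrix (Fin s) (Fin m) ℝ)
    (T : Matrix (Fin s) (Fin n) ℝ) (x : Fin n → ℝ) (z : Fin s → ℝ) : Set (Fin m → ℝ) :=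
  {y | y ∈ LowerFeas A T x z ∧ ∀ y' ∈ LowerFeas A T x z, d ⬝ᵥ y ≤ d ⬝ᵥ y'}

/-- `f(x,z) = cᵀx + inf { qᵀ y | y ∈ Ψ(x,z) }` with values in `ℝ ∪ {±∞}`
(the infimum over the empty set being `+∞`). -/
def fE {n m s : ℕ} (c : Fin n → ℝ) (q d : Fin m → ℝ) (A : Matrix (Fin s) (Fin m) ℝ)
    (T : Matrix (Fin s) (Fin n) ℝ) (x : Fin n → ℝ) (z : Fin s → ℝ) : EReal :=
  ((c ⬝ᵥ x : ℝ) : EReal) + sInf ((fun y => ((q ⬝ᵥ y : ℝ) : EReal)) '' Psi d A T x z)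

/-- `P = { (x,z) | ∃ y, A y ≤ T x + z }`. -/
def Pfeas {n m s : ℕ} (A : Matrix (Fin s) (Fin m) ℝ) (T : Matrix (Fin s) (Fin n) ℝ) :
    Set ((Fin n → ℝ) × (Fin s → ℝ)) :=
  {p | (LowerFeas A T p.1 p.2).Nonempty}

/-- `dom f = { (x,z) | f(x,z) ∈ ℝ }`. -/
def domf {n m s : ℕ} (c : Fin n → ℝ) (q d : Fin m → ℝ) (A : Matrix (Fin s) (Fin m) ℝ)
    (T : Matrix (Fin s) (Fin n) ℝ) : Set ((Fin n → ℝ) × (Fin s → ℝ)) :=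
  {p | fE c q d A T p.1 p.2 ≠ ⊤ ∧ fE c q d A T p.1 p.2 ≠ ⊥}

/-- Topological support of a Borel measure. -/
def msupport {s : ℕ} (μ : Measure (Fin s → ℝ)) : Set (Fin s → ℝ) :=
  {z | ∀ U : Set (Fin s → ℝ), IsOpen U → z ∈ U → μ U ≠ 0}

/-- `P_Z = { x | (x,z) ∈ P for all z ∈ supp μ_Z }`. -/
def PZSet {n m s : ℕ} (A : Matrix (Fin s) (Fin m) ℝ) (T : Matrix (Fin s) (Fin n) ℝ)
    (μZ : Measure (Fin s → ℝ)) : Set (Fin n → ℝ) :=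
  {x | ∀ z ∈ msupport μZ, (x, z) ∈ Pfeas A T}


/-- A polyhedron: solution set of finitely many linear inequalities. -/
def IsPolyhedron {n : ℕ} (X : Set (Fin n → ℝ)) : Prop :=
  ∃ (k : ℕ) (B : Matrix (Fin k) (Fin n) ℝ) (b : Fin k → ℝ), X = {x | B.mulVec x ≤ b}

/-- An atomless probability space: every set of positive measure has a measurable
subset of strictly smaller positive measure. -/
def AtomlessSpace {Ω : Type*} [MeasurableSpace Ω] (μ : Measure Ω) : Prop :=
  ∀ S : Set Ω, MeasurableSet S → 0 < μ S →
    ∃ B ⊆ S, MeasurableSet B ∧ 0 < μ B ∧ μ B < μ S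

/-- A set of Borel probability measures is locally uniformly `‖·‖^p`-integrating if around
every member there is a weakly open neighbourhood on which the `p`-th moment tails vanish
uniformly (the limit as `a → ∞` of the antitone tail suprema being their infimum). -/
def LocUnifIntegrating {s : ℕ} (pr : ℝ) (M : Set (ProbabilityMeasure (Fin s → ℝ))) : Prop :=
  ∀ μ ∈ M, ∀ ε : ℝ, 0 < ε →
    ∃ N : Set (ProbabilityMeasure (Fin s → ℝ)), IsOpen N ∧ μ ∈ N ∧
      ⨅ a : ℝ, ⨆ ν ∈ M ∩ N,
        ∫⁻ z in {z : Fin s → ℝ | a ≤ ‖z‖}, ENNReal.ofReal (‖z‖ ^ pr)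
          ∂(ν : Measure (Fin s → ℝ)) ≤ ENNReal.ofReal ε

/-
Two inputs are combined for each fixed decision `x`.

Analytic: on an atomless space all laws are realised simultaneously as quantiles of one uniform
variable. If `μ` varies weakly and `f` is upper semicontinuous, the quantiles of the laws of `f`
are almost surely upper semicontinuous in `μ`, and locally uniform integrability of the `p`-th
moments upgrades this to `L^p`-convergence to zero of the positive part of the increment. A finite
convex monotone functional on `L^p` is continuous, and monotonicity makes the one-sided
convergence sufficient.

Polyhedral: by Fourier–Motzkin elimination the epigraph of the optimal value of a linear program,
as a function of the right-hand side, is a polyhedral cone, so the value is Lipschitz wherever it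
is defined. Applied to the lower level and then to the problem over the lower level solutions, this
makes `f` real-valued, continuous and of linear growth.

The optimal value is an infimum over `x` of upper semicontinuous functions.
-/
open ProbabilityTheory

section NormedLattice

variable {E : Type*} [NormedAddCommGroup E] [Lattice E] [IsOrderedAddMonoid E]

-- If `R` were unbounded above near `0`, the series of moduli of a rapidly decreasing sequence along
-- which `R` blows up would converge to a point dominating the whole sequence.
lemma isBoundedUnder_nhds_zero_of_monotone [HasSolidNorm E] [CompleteSpace E] {R : E → ℝ}
    (hmono : Monotone R) : (𝓝 (0 : E)).IsBoundedUnder (· ≤ ·) R := by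
  by_contra hunbdd
  have hblowup (k : ℕ) : ∃ y : E, ‖y‖ < (1 / 2) ^ k ∧ (k : ℝ) < R y := by
    by_contra! hle
    refine hunbdd ⟨k, eventually_map.2 ?_⟩
    filter_upwards [Metric.ball_mem_nhds (0 : E) (by positivity : (0 : ℝ) < (1 / 2) ^ k)] with y hy
    exact hle y (mem_ball_zero_iff.1 hy)
  choose y hynorm hRy using hblowup
  have hsum : Summable fun k => |y k| :=
    .of_norm_bounded summable_geometric_two fun k => by
      simpa only [norm_abs_eq_norm] using (hynorm k).le
  have hle (k : ℕ) : y k ≤ ∑' j, |y j| :=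
    (le_abs_self _).trans (hsum.le_tsum k fun j _ => abs_nonneg (y j))
  obtain ⟨k, hk⟩ := exists_nat_gt (R (∑' j, |y j|))
  exact (hk.trans (hRy k)).not_ge (hmono (hle k))

lemma continuous_of_convexOn_of_monotone [HasSolidNorm E] [NormedSpace ℝ E] [CompleteSpace E]
    {R : E → ℝ} (hconv : ConvexOn ℝ univ R) (hmono : Monotone R) : Continuous R :=
  have hbdd : ∃ x₀ ∈ univ, (𝓝 x₀).IsBoundedUnder (· ≤ ·) R :=
    ⟨0, mem_univ 0, isBoundedUnder_nhds_zero_of_monotone hmono⟩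
  continuousOn_univ.1 <| ((hconv.continuousOn_tfae isOpen_univ univ_nonempty).out 3 1).1 hbdd

lemma eventually_lt_of_tendsto_posPart_sub {ι : Type*} {l : Filter ι} {R : E → ℝ}
    (hcont : Continuous R) (hmono : Monotone R) {y : ι → E} {y₀ : E}
    (hy : Tendsto (fun i => (y i - y₀)⁺) l (𝓝 0)) {a : ℝ} (ha : R y₀ < a) :
    ∀ᶠ i in l, R (y i) < a := by
  have hlim : Tendsto (fun i => R (y₀ + (y i - y₀)⁺)) l (𝓝 (R y₀)) :=
    (hcont.tendsto' _ _ (by rw [add_zero])).comp (hy.const_add y₀)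
  filter_upwards [hlim.eventually_lt_const ha] with i hi
  exact (hmono (sub_le_iff_le_add'.1 (le_posPart _))).trans_lt hi

end NormedLattice

section Quantile

/-- The lower quantile function of a probability measure on `ℝ`. It is meaningful on `(0, 1)` only:
elsewhere the infimum may be that of an empty or an unbounded set, which is `0`. -/
def quantile (ρ : Measure ℝ) (u : ℝ) : ℝ := sInf {x | u ≤ cdf ρ x}

variable (ρ : Measure ℝ)

lemma quantile_le_iff {u : ℝ} (hu : u ∈ Ioo (0 : ℝ) 1) {x : ℝ} :
    quantile ρ u ≤ x ↔ u ≤ cdf ρ x := by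
  have hbdd : BddBelow {x | u ≤ cdf ρ x} := by
    obtain ⟨a, ha⟩ := ((tendsto_cdf_atBot ρ).eventually_lt_const hu.1).exists
    exact ⟨a, fun y hy => ((cdf ρ).mono.reflect_lt (ha.trans_le hy)).le⟩
  have hne : {x | u ≤ cdf ρ x}.Nonempty := by
    obtain ⟨b, hb⟩ := ((tendsto_cdf_atTop ρ).eventually_const_lt hu.2).exists
    exact ⟨b, hb.le⟩
  refine ⟨fun h => ?_, fun h => csInf_le hbdd h⟩
  have hright : Tendsto (cdf ρ) (𝓝[>] x) (𝓝 (cdf ρ x)) :=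
    ((cdf ρ).right_continuous x).mono_left (nhdsWithin_mono x Ioi_subset_Ici_self)
  refine ge_of_tendsto hright (eventually_mem_nhdsWithin.mono fun y hy => ?_)
  obtain ⟨w, hw, hwy⟩ := exists_lt_of_csInf_lt hne (h.trans_lt hy)
  exact le_trans hw ((cdf ρ).mono hwy.le)

lemma le_cdf_quantile {u : ℝ} (hu : u ∈ Ioo (0 : ℝ) 1) : u ≤ cdf ρ (quantile ρ u) :=
  (quantile_le_iff ρ hu).1 le_rfl

lemma monotoneOn_quantile : MonotoneOn (quantile ρ) (Ioo 0 1) := fun _ hu _ hv huv =>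
  (quantile_le_iff ρ hu).2 (huv.trans (le_cdf_quantile ρ hv))

lemma aemeasurable_quantile : AEMeasurable (quantile ρ) (volume.restrict (Ioo 0 1)) :=
  aemeasurable_restrict_of_monotoneOn measurableSet_Ioo (monotoneOn_quantile ρ)

instance isProbabilityMeasure_restrict_Ioo_zero_one :
    IsProbabilityMeasure ((volume : Measure ℝ).restrict (Ioo 0 1)) :=
  ⟨by simp⟩

variable [IsProbabilityMeasure ρ]

lemma map_quantile : (volume.restrict (Ioo 0 1)).map (quantile ρ) = ρ := by
  have := Measure.isProbabilityMeasure_map (aemeasurable_quantile ρ)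
  refine Measure.ext_of_Iic _ _ fun x => ?_
  have hpre : quantile ρ ⁻¹' Iic x ∩ Ioo 0 1 = Iic (cdf ρ x) ∩ Ioo 0 1 := by
    ext u
    exact and_congr_left fun hu => quantile_le_iff ρ hu
  calc (volume.restrict (Ioo 0 1)).map (quantile ρ) (Iic x)
      = volume.restrict (Ioo 0 1) (Iic (cdf ρ x)) := by
        rw [Measure.map_apply_of_aemeasurable (aemeasurable_quantile ρ) measurableSet_Iic,
          Measure.restrict_apply' measurableSet_Ioo, hpre,
          Measure.restrict_apply' measurableSet_Ioo]
    _ = volume (Ioc 0 (cdf ρ x)) := by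
        rw [Measure.restrict_congr_set Ioo_ae_eq_Ioc, Measure.restrict_apply measurableSet_Iic,
          inter_comm, Ioc_inter_Iic, min_eq_right (cdf_le_one ρ x)]
    _ = ρ (Iic x) := by rw [Real.volume_Ioc, sub_zero, ofReal_cdf]

lemma cdf_quantile [NullSingletonClass ρ] {u : ℝ} (hu : u ∈ Ioo (0 : ℝ) 1) :
    cdf ρ (quantile ρ u) = u := by
  set x := quantile ρ u
  have hjump : cdf ρ x ≤ Function.leftLim (cdf ρ) x := by
    have h := (cdf ρ).measure_singleton x
    rw [measure_cdf, measure_singleton] at h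
    exact sub_nonpos.1 (ENNReal.ofReal_eq_zero.1 h.symm)
  have hleft : Function.leftLim (cdf ρ) x ≤ u :=
    le_of_tendsto ((cdf ρ).mono.tendsto_leftLim x) <| eventually_mem_nhdsWithin.mono fun v hv =>
      (not_le.1 fun h => (not_le.2 hv) ((quantile_le_iff ρ hu).2 h)).le
  exact (hjump.trans hleft).antisymm (le_cdf_quantile ρ hu)

lemma measurePreserving_cdf [NullSingletonClass ρ] :
    MeasurePreserving (cdf ρ) ρ (volume.restrict (Ioo 0 1)) := by
  have hm : Measurable (cdf ρ) := (cdf ρ).mono.measurable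
  have hid : cdf ρ ∘ quantile ρ =ᵐ[volume.restrict (Ioo 0 1)] id :=
    (ae_restrict_mem measurableSet_Ioo).mono fun u hu => cdf_quantile ρ hu
  refine ⟨hm, ?_⟩
  nth_rw 2 [← map_quantile ρ]
  rw [AEMeasurable.map_map_of_aemeasurable hm.aemeasurable (aemeasurable_quantile ρ),
    Measure.map_congr hid, Measure.map_id]

lemma identDistrib_quantile_comp {Ω E : Type*} [MeasurableSpace Ω] [MeasurableSpace E]
    {P : Measure Ω} {U : Ω → ℝ} (hU : MeasurePreserving U P (volume.restrict (Ioo 0 1)))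
    (ν : Measure E) [IsProbabilityMeasure ν] {f : E → ℝ} (hf : AEMeasurable f ν) :
    IdentDistrib (quantile (ν.map f) ∘ U) f P ν := by
  have := Measure.isProbabilityMeasure_map hf
  have hq := aemeasurable_quantile (ν.map f)
  refine ⟨hq.comp_quasiMeasurePreserving hU.quasiMeasurePreserving, hf, ?_⟩
  rw [← AEMeasurable.map_map_of_aemeasurable (by rwa [hU.map_eq]) hU.aemeasurable, hU.map_eq,
    map_quantile]

-- Outside the countably many values of the distribution function at rational points, the
-- inequality `u ≤ cdf ρ r` is strict and therefore survives a small perturbation of the law.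
lemma ae_eventually_quantile_le {ι : Type*} {l : Filter ι} {ρs : ι → Measure ℝ}
    [∀ i, IsProbabilityMeasure (ρs i)]
    (hρ : ∀ x, ρ (Iio x) ≤ liminf (fun i => ρs i (Iio x)) l) :
    ∀ᵐ u ∂(volume.restrict (Ioo (0 : ℝ) 1)), ∀ x, quantile ρ u < x →
      ∀ᶠ i in l, quantile (ρs i) u ≤ x := by
  have hgeneric : ∀ᵐ u ∂(volume.restrict (Ioo (0 : ℝ) 1)), u ∉ range fun r : ℚ => cdf ρ r :=
    (countable_range _).ae_notMem _
  filter_upwards [hgeneric, ae_restrict_mem measurableSet_Ioo] with u hurange hu x hx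
  obtain ⟨r, hqr, hrx⟩ := exists_rat_btwn hx
  have hur : u < cdf ρ r :=
    ((quantile_le_iff ρ hu).1 hqr.le).lt_of_ne fun h => hurange ⟨r, h.symm⟩
  have hlt : ENNReal.ofReal u < ρ (Iio x) :=
    calc ENNReal.ofReal u < ENNReal.ofReal (cdf ρ r) :=
          (ENNReal.ofReal_lt_ofReal_iff (hu.1.trans hur)).2 hur
      _ = ρ (Iic r) := ofReal_cdf ρ r
      _ ≤ ρ (Iio x) := measure_mono (Iic_subset_Iio.2 hrx)
  filter_upwards [eventually_lt_of_lt_liminf (hlt.trans_le (hρ x))] with i hi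
  rw [quantile_le_iff _ hu, ← ENNReal.ofReal_le_ofReal_iff (cdf_nonneg _ _), ofReal_cdf]
  exact hi.le.trans (measure_mono Iio_subset_Iic_self)

end Quantile

section Atomless

variable {Ω : Type*} [MeasurableSpace Ω] {P : Measure Ω} {β : Type*}

/-- The probability that two independent copies of `V` take the same value; it vanishes exactly
when the law of `V` has no atoms. -/
def collisionMass (P : Measure Ω) (V : Ω → β) : ℝ≥0∞ := P.prod P {ω | V ω.1 = V ω.2}

lemma collisionMass_comp {γ : Type*} {e : β → γ} (he : e.Injective) (V : Ω → β) :
    collisionMass P (e ∘ V) = collisionMass P V := by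
  simp only [collisionMass, Function.comp_apply, he.eq_iff]

-- Countably many variables combine into a single one separating whatever any of them separates, so
-- the infimum of the collision mass is attained.
lemma exists_measurable_collisionMass_le (P : Measure Ω) :
    ∃ V : Ω → ℝ, Measurable V ∧
      ∀ W : Ω → ℝ, Measurable W → collisionMass P V ≤ collisionMass P W := by
  obtain ⟨m, -, hm, hmem⟩ := exists_seq_tendsto_sInf
    (S := collisionMass P '' {V : Ω → ℝ | Measurable V}) ⟨_, fun _ => 0, measurable_const, rfl⟩
    (OrderBot.bddBelow _)
  choose V hV hVm using hmem
  obtain ⟨e, he⟩ := exists_measurableEmbedding_real (ℕ → ℝ)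
  refine ⟨e ∘ fun ω k => V k ω, he.measurable.comp (measurable_pi_lambda _ hV), fun W hW => ?_⟩
  rw [collisionMass_comp he.injective]
  refine (ge_of_tendsto' hm fun k => ?_).trans (sInf_le (mem_image_of_mem _ hW))
  rw [← hVm k]
  exact measure_mono fun ω hω => congr_fun hω k

lemma exists_collisionMass_lt [IsFiniteMeasure P] (hP : AtomlessSpace P) {V : Ω → ℝ}
    (hV : Measurable V) {v : ℝ} (hv : P (V ⁻¹' {v}) ≠ 0) :
    ∃ W : Ω → ℝ, Measurable W ∧ collisionMass P W < collisionMass P V := by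
  have hS : MeasurableSet (V ⁻¹' {v}) := hV (measurableSet_singleton v)
  obtain ⟨B, hBS, hB, hB0, hBlt⟩ := hP _ hS (pos_iff_ne_zero.2 hv)
  have hdiff : P (V ⁻¹' {v} \ B) ≠ 0 := by
    rw [measure_sdiff hBS hB.nullMeasurableSet (measure_ne_top P B)]
    exact (tsub_pos_of_lt hBlt).ne'
  let W : Ω → ℝ × ℝ := fun ω => (V ω, B.indicator 1 ω)
  obtain ⟨e, he⟩ := exists_measurableEmbedding_real (ℝ × ℝ)
  refine ⟨e ∘ W, he.measurable.comp (hV.prodMk (measurable_one.indicator hB)), ?_⟩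
  have hdisj : Disjoint {ω : Ω × Ω | W ω.1 = W ω.2} (B ×ˢ (V ⁻¹' {v} \ B)) := by
    refine disjoint_left.2 fun ω hω hprod => ?_
    have hind : B.indicator (1 : Ω → ℝ) ω.1 = B.indicator 1 ω.2 := congr_arg Prod.snd hω
    rw [indicator_of_mem hprod.1, indicator_of_notMem hprod.2.2] at hind
    exact one_ne_zero hind
  have hsub : {ω : Ω × Ω | W ω.1 = W ω.2} ∪ B ×ˢ (V ⁻¹' {v} \ B) ⊆ {ω | V ω.1 = V ω.2} :=
    union_subset (fun _ hω => congr_arg Prod.fst hω) fun _ hω =>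
      (hBS hω.1).trans hω.2.1.symm
  calc collisionMass P (e ∘ W)
      < P.prod P {ω | W ω.1 = W ω.2} + P B * P (V ⁻¹' {v} \ B) := by
        rw [collisionMass_comp he.injective]
        exact ENNReal.lt_add_right (measure_ne_top _ _) (mul_ne_zero hB0.ne' hdiff)
    _ = P.prod P ({ω | W ω.1 = W ω.2} ∪ B ×ˢ (V ⁻¹' {v} \ B)) := by
        rw [measure_union hdisj (hB.prod (hS.diff hB)), Measure.prod_prod]
    _ ≤ collisionMass P V := measure_mono hsub

lemma exists_measurable_nullSingletonClass_map [IsFiniteMeasure P] (hP : AtomlessSpace P) :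
    ∃ V : Ω → ℝ, Measurable V ∧ NullSingletonClass (P.map V) := by
  obtain ⟨V, hV, hmin⟩ := exists_measurable_collisionMass_le P
  refine ⟨V, hV, ⟨fun v => ?_⟩⟩
  rw [Measure.map_apply hV (measurableSet_singleton v)]
  by_contra hv
  obtain ⟨W, hW, hlt⟩ := exists_collisionMass_lt hP hV hv
  exact hlt.not_ge (hmin W hW)

lemma exists_measurePreserving_uniform [IsProbabilityMeasure P] (hP : AtomlessSpace P) :
    ∃ U : Ω → ℝ, MeasurePreserving U P (volume.restrict (Ioo 0 1)) := by
  obtain ⟨V, hV, _⟩ := exists_measurable_nullSingletonClass_map hP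
  have := Measure.isProbabilityMeasure_map (μ := P) hV.aemeasurable
  exact ⟨cdf (P.map V) ∘ V, (measurePreserving_cdf _).comp (hV.measurePreserving P)⟩

end Atomless

section LpConvergence

variable {Ω ι : Type*} [MeasurableSpace Ω] {P : Measure Ω} {l : Filter ι} [l.IsCountablyGenerated]
  {p : ℝ≥0∞}

lemma tendsto_eLpNorm_zero_of_dominated {E F : Type*} [NormedAddCommGroup E]
    [NormedAddCommGroup F] (hp₀ : p ≠ 0) (hp : p ≠ ⊤) {f : ι → Ω → E} {g : Ω → F}
    (hf : ∀ᶠ i in l, AEStronglyMeasurable (f i) P) (hg : MemLp g p P)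
    (hfg : ∀ᶠ i in l, ∀ᵐ ω ∂P, ‖f i ω‖ ≤ ‖g ω‖)
    (hlim : ∀ᵐ ω ∂P, Tendsto (fun i => f i ω) l (𝓝 0)) :
    Tendsto (fun i => eLpNorm (f i) p P) l (𝓝 0) := by
  have hpr : 0 < p.toReal := ENNReal.toReal_pos hp₀ hp
  have hint : Tendsto (fun i => ∫⁻ ω, ‖f i ω‖ₑ ^ p.toReal ∂P) l (𝓝 (∫⁻ _, 0 ∂P)) := by
    refine tendsto_lintegral_filter_of_dominated_convergence' (fun ω => ‖g ω‖ₑ ^ p.toReal)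
      (hf.mono fun i hi => hi.enorm.pow_const _) ?_
      ((eLpNorm_lt_top_iff_lintegral_rpow_enorm_lt_top hp₀ hp).1 hg.2).ne ?_
    · filter_upwards [hfg] with i hi
      filter_upwards [hi] with ω hω
      gcongr
      exact enorm_le_iff_norm_le.2 hω
    · filter_upwards [hlim] with ω hω
      simpa [hpr] using hω.enorm.ennrpow_const p.toReal
  simpa [eLpNorm_eq_lintegral_rpow_enorm_toReal hp₀ hp, hpr] using
    hint.ennrpow_const (1 / p.toReal)

variable [IsFiniteMeasure P] {Y : ι → Ω → ℝ} {Y₀ : Ω → ℝ}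

lemma tendsto_eLpNorm_posPart_min_sub (hp₀ : p ≠ 0) (hp : p ≠ ⊤)
    (hY : ∀ᶠ i in l, AEStronglyMeasurable (Y i) P) (hY₀ : MemLp Y₀ p P)
    (hlim : ∀ᵐ ω ∂P, ∀ x, Y₀ ω < x → ∀ᶠ i in l, Y i ω ≤ x) (C : ℝ) :
    Tendsto (fun i => eLpNorm (fun ω => (min (Y i ω) C - Y₀ ω)⁺) p P) l (𝓝 0) := by
  refine tendsto_eLpNorm_zero_of_dominated hp₀ hp ?_ ((memLp_const C).sub hY₀) ?_ ?_
  · filter_upwards [hY] with i hi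
    exact ((hi.inf aestronglyMeasurable_const).sub hY₀.1).sup aestronglyMeasurable_const
  · refine .of_forall fun i => .of_forall fun ω => ?_
    calc ‖(min (Y i ω) C - Y₀ ω)⁺‖ = (min (Y i ω) C - Y₀ ω)⁺ :=
          Real.norm_of_nonneg (posPart_nonneg _)
      _ ≤ (C - Y₀ ω)⁺ := posPart_mono (sub_le_sub_right (min_le_right _ _) _)
      _ ≤ ‖C - Y₀ ω‖ := sup_le (le_abs_self _) (abs_nonneg _)
  · filter_upwards [hlim] with ω hω
    refine tendsto_order.2 ⟨fun a ha => .of_forall fun i => ha.trans_le (posPart_nonneg _),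
      fun a ha => ?_⟩
    filter_upwards [hω (Y₀ ω + a / 2) (by linarith)] with i hi
    exact max_lt (by linarith [min_le_left (Y i ω) C]) ha

-- A one-sided Vitali theorem: cutting off at a high level `C` leaves a dominated family.
lemma tendsto_eLpNorm_posPart_sub (hp₁ : 1 ≤ p) (hp : p ≠ ⊤)
    (hY : ∀ᶠ i in l, AEStronglyMeasurable (Y i) P) (hY₀ : MemLp Y₀ p P)
    (hlim : ∀ᵐ ω ∂P, ∀ x, Y₀ ω < x → ∀ᶠ i in l, Y i ω ≤ x)
    (htail : ∀ ε : ℝ≥0∞, ε ≠ 0 →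
      ∃ C : ℝ, ∀ᶠ i in l, eLpNorm (fun ω => (Y i ω - C)⁺) p P ≤ ε) :
    Tendsto (fun i => eLpNorm (fun ω => (Y i ω - Y₀ ω)⁺) p P) l (𝓝 0) := by
  have hp₀ : p ≠ 0 := (zero_lt_one.trans_le hp₁).ne'
  refine ENNReal.tendsto_nhds_zero.2 fun ε hε => ?_
  have hε2 : ε / 2 ≠ 0 := (ENNReal.half_pos hε.ne').ne'
  obtain ⟨C, hC⟩ := htail (ε / 2) hε2
  have hcut := tendsto_eLpNorm_posPart_min_sub hp₀ hp hY hY₀ hlim C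
  filter_upwards [hY, hC, ENNReal.tendsto_nhds_zero.1 hcut _ (pos_iff_ne_zero.2 hε2)]
    with i hYi htail_le hcut_le
  have hsplit (ω : Ω) :
      ‖(Y i ω - Y₀ ω)⁺‖ ≤ (min (Y i ω) C - Y₀ ω)⁺ + (Y i ω - C)⁺ := by
    have hexcess : Y i ω - min (Y i ω) C ≤ (Y i ω - C)⁺ := by
      rcases min_choice (Y i ω) C with h | h <;> rw [h]
      · exact (sub_self (Y i ω)).trans_le (posPart_nonneg _)
      · exact le_posPart _
    rw [Real.norm_of_nonneg (posPart_nonneg _)]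
    refine sup_le ?_ (add_nonneg (posPart_nonneg _) (posPart_nonneg _))
    linarith [le_posPart (min (Y i ω) C - Y₀ ω)]
  calc eLpNorm (fun ω => (Y i ω - Y₀ ω)⁺) p P
      ≤ eLpNorm (fun ω => (min (Y i ω) C - Y₀ ω)⁺ + (Y i ω - C)⁺) p P := eLpNorm_mono_real hsplit
    _ ≤ eLpNorm (fun ω => (min (Y i ω) C - Y₀ ω)⁺) p P + eLpNorm (fun ω => (Y i ω - C)⁺) p P :=
        eLpNorm_add_le
          (((hYi.inf aestronglyMeasurable_const).sub hY₀.1).sup aestronglyMeasurable_const)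
          ((hYi.sub aestronglyMeasurable_const).sup aestronglyMeasurable_const) hp₁
    _ ≤ ε / 2 + ε / 2 := add_le_add hcut_le htail_le
    _ = ε := ENNReal.add_halves ε

end LpConvergence

section MomentTails

variable {E : Type*} [NormedAddCommGroup E] [MeasurableSpace E] {ν : Measure E} {p : ℝ≥0∞}

lemma eLpNorm_id_eq_lintegral (hp₀ : p ≠ 0) (hp : p ≠ ⊤) :
    eLpNorm (id : E → E) p ν =
      (∫⁻ z, ENNReal.ofReal (‖z‖ ^ p.toReal) ∂ν) ^ (1 / p.toReal) := by
  simp_rw [eLpNorm_eq_lintegral_rpow_enorm_toReal hp₀ hp, id, ← ofReal_norm,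
    ENNReal.ofReal_rpow_of_nonneg (norm_nonneg _) ENNReal.toReal_nonneg]

variable {f : E → ℝ} {K : ℝ≥0}

lemma eLpNorm_posPart_sub_le_of_linear_growth [OpensMeasurableSpace E]
    (hf : ∀ z, f z ≤ K * (1 + ‖z‖)) (a : ℝ) :
    eLpNorm (fun z => (f z - K * (1 + |a|))⁺) p ν ≤
      K * eLpNorm (id : E → E) p (ν.restrict {z | a ≤ ‖z‖}) := by
  have hmeas : MeasurableSet {z : E | a ≤ ‖z‖} := measurableSet_le measurable_const measurable_norm
  have hle (z : E) : ‖(f z - K * (1 + |a|))⁺‖ ≤ K * ‖{z : E | a ≤ ‖z‖}.indicator id z‖ := by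
    rw [Real.norm_of_nonneg (posPart_nonneg _)]
    refine sup_le ?_ (by positivity)
    by_cases hz : a ≤ ‖z‖
    · rw [indicator_of_mem (by exact hz), id]
      nlinarith [hf z, K.coe_nonneg, abs_nonneg a]
    · rw [indicator_of_notMem (by exact hz), norm_zero, mul_zero]
      nlinarith [hf z, K.coe_nonneg, le_abs_self a]
  rw [← eLpNorm_indicator_eq_eLpNorm_restrict hmeas]
  exact eLpNorm_le_nnreal_smul_eLpNorm_of_ae_le_mul (.of_forall hle) p

lemma memLp_of_linear_growth [IsFiniteMeasure ν] (hf_meas : AEStronglyMeasurable f ν)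
    (hf : ∀ z, |f z| ≤ K * (1 + ‖z‖)) (hν : MemLp (id : E → E) p ν) : MemLp f p ν := by
  have hbound : MemLp (fun z : E => (K : ℝ) * (1 + ‖z‖)) p ν :=
    ((memLp_const (1 : ℝ)).add hν.norm).const_mul (K : ℝ)
  exact hbound.mono' hf_meas (.of_forall hf)

end MomentTails

namespace LocUnifIntegrating

variable {s : ℕ} {p : ℝ≥0∞} {M : Set (ProbabilityMeasure (Fin s → ℝ))}
  {μ : ProbabilityMeasure (Fin s → ℝ)}

lemma exists_eventually_eLpNorm_restrict_le (hM : LocUnifIntegrating p.toReal M) (hp₀ : p ≠ 0)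
    (hp : p ≠ ⊤) (hμ : μ ∈ M) {ε : ℝ≥0∞} (hε : ε ≠ 0) :
    ∃ a : ℝ, ∀ᶠ ν : ProbabilityMeasure (Fin s → ℝ) in 𝓝[M] μ,
      eLpNorm (id : (Fin s → ℝ) → _) p (ν.toMeasure.restrict {z | a ≤ ‖z‖}) ≤ ε := by
  have hpr : 0 < p.toReal := ENNReal.toReal_pos hp₀ hp
  obtain ⟨r, -, hr₀, hrε⟩ := ENNReal.lt_iff_exists_real_btwn.1 (pos_iff_ne_zero.2 hε)
  have hr : 0 < r := ENNReal.ofReal_pos.1 hr₀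
  obtain ⟨N, hN, hμN, hinf⟩ := hM μ hμ (r ^ p.toReal) (Real.rpow_pos_of_pos hr _)
  have hlt : ENNReal.ofReal (r ^ p.toReal) < ε ^ p.toReal := by
    rw [← ENNReal.ofReal_rpow_of_pos hr]
    exact ENNReal.rpow_lt_rpow hrε hpr
  obtain ⟨a, ha⟩ := iInf_lt_iff.1 (hinf.trans_lt hlt)
  refine ⟨a, ?_⟩
  filter_upwards [self_mem_nhdsWithin, mem_nhdsWithin_of_mem_nhds (hN.mem_nhds hμN)]
    with ν hνM hνN
  rw [eLpNorm_id_eq_lintegral hp₀ hp, one_div, ENNReal.rpow_inv_le_iff hpr]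
  exact ((iSup₂_le_iff.1 le_rfl) ν ⟨hνM, hνN⟩).trans ha.le

lemma memLp_id (hM : LocUnifIntegrating p.toReal M) (hp₀ : p ≠ 0) (hp : p ≠ ⊤) (hμ : μ ∈ M) :
    MemLp (id : (Fin s → ℝ) → _) p μ.toMeasure := by
  obtain ⟨a, ha⟩ := hM.exists_eventually_eLpNorm_restrict_le hp₀ hp hμ one_ne_zero
  have hmeas : MeasurableSet {z : Fin s → ℝ | a ≤ ‖z‖} :=
    measurableSet_le measurable_const measurable_norm
  have htail : MemLp ({z : Fin s → ℝ | a ≤ ‖z‖}.indicator id) p μ.toMeasure :=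
    (memLp_indicator_iff_restrict hmeas).2
      ⟨aestronglyMeasurable_id, (ha.self_of_nhdsWithin hμ).trans_lt ENNReal.one_lt_top⟩
  have hball : MemLp ({z : Fin s → ℝ | a ≤ ‖z‖}ᶜ.indicator id) p μ.toMeasure := by
    refine .of_bound (aestronglyMeasurable_id.indicator hmeas.compl) |a| (.of_forall fun z => ?_)
    by_cases hz : a ≤ ‖z‖
    · simp [hz]
    · simpa [hz] using (not_le.1 hz).le.trans (le_abs_self a)
  rw [← indicator_self_add_compl {z : Fin s → ℝ | a ≤ ‖z‖} id]
  exact htail.add hball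

lemma exists_eventually_eLpNorm_posPart_sub_le (hM : LocUnifIntegrating p.toReal M) (hp₀ : p ≠ 0)
    (hp : p ≠ ⊤) (hμ : μ ∈ M) {f : (Fin s → ℝ) → ℝ} {K : ℝ≥0} (hf : ∀ z, f z ≤ K * (1 + ‖z‖))
    {ε : ℝ≥0∞} (hε : ε ≠ 0) :
    ∃ C : ℝ, ∀ᶠ ν : ProbabilityMeasure (Fin s → ℝ) in 𝓝[M] μ,
      eLpNorm (fun z => (f z - C)⁺) p ν.toMeasure ≤ ε := by
  obtain ⟨a, ha⟩ := hM.exists_eventually_eLpNorm_restrict_le hp₀ hp hμ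
    (ENNReal.div_pos hε ENNReal.coe_ne_top : 0 < ε / K).ne'
  refine ⟨K * (1 + |a|), ha.mono fun ν hν => ?_⟩
  calc _ ≤ K * eLpNorm id p (ν.toMeasure.restrict {z | a ≤ ‖z‖}) :=
        eLpNorm_posPart_sub_le_of_linear_growth hf a
    _ ≤ K * (ε / K) := by gcongr
    _ ≤ ε := ENNReal.mul_div_le

end LocUnifIntegrating

section Risk

variable {Ω : Type*} [MeasurableSpace Ω] {P : Measure Ω} {p : ℝ≥0∞}

lemma tendsto_posPart_toLp_sub [Fact (1 ≤ p)] {ι : Type*} {l : Filter ι} {Y : ι → Ω → ℝ}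
    {Y₀ : Ω → ℝ} (hY : ∀ i, MemLp (Y i) p P) (hY₀ : MemLp Y₀ p P)
    (hlim : Tendsto (fun i => eLpNorm (fun ω => (Y i ω - Y₀ ω)⁺) p P) l (𝓝 0)) :
    Tendsto (fun i => ((hY i).toLp - hY₀.toLp)⁺) l (𝓝 0) := by
  refine tendsto_zero_iff_enorm_tendsto_zero.2 (hlim.congr fun i => ?_)
  rw [Lp.enorm_def]
  refine eLpNorm_congr_ae ?_
  filter_upwards [Lp.coeFn_sup ((hY i).toLp - hY₀.toLp) 0, Lp.coeFn_zero ℝ p P,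
    Lp.coeFn_sub (hY i).toLp hY₀.toLp, (hY i).coeFn_toLp, hY₀.coeFn_toLp]
    with ω hsup hzero hsub hYω hY₀ω
  simp only [posPart_def, hsup, Pi.sup_apply, hzero, hsub, Pi.sub_apply, hYω, hY₀ω, Pi.zero_apply]

variable {s : ℕ} {M : Set (ProbabilityMeasure (Fin s → ℝ))} {f : (Fin s → ℝ) → ℝ} {K : ℝ≥0}

-- All laws are realised on `Ω` at once by quantiles of a single uniform variable; weak convergence
-- of the laws then becomes almost sure one-sided convergence of these realisations.
lemma tendsto_eLpNorm_posPart_quantile_sub [IsFiniteMeasure P] {U : Ω → ℝ}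
    (hU : MeasurePreserving U P (volume.restrict (Ioo 0 1))) (hp₁ : 1 ≤ p) (hp : p ≠ ⊤)
    (hM : LocUnifIntegrating p.toReal M) (hf : UpperSemicontinuous f)
    (hfK : ∀ z, |f z| ≤ K * (1 + ‖z‖)) {μ : ProbabilityMeasure (Fin s → ℝ)} (hμ : μ ∈ M) :
    Tendsto (fun ν : ProbabilityMeasure (Fin s → ℝ) => eLpNorm
        (fun ω => (quantile (ν.toMeasure.map f) (U ω) -
          quantile (μ.toMeasure.map f) (U ω))⁺) p P) (𝓝[M] μ) (𝓝 0) := by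
  have hp₀ : p ≠ 0 := (zero_lt_one.trans_le hp₁).ne'
  have hdistrib (ν : ProbabilityMeasure (Fin s → ℝ)) :=
    identDistrib_quantile_comp hU ν.toMeasure hf.measurable.aemeasurable
  have hprob (ν : ProbabilityMeasure (Fin s → ℝ)) :
      IsProbabilityMeasure (ν.toMeasure.map f) :=
    Measure.isProbabilityMeasure_map hf.measurable.aemeasurable
  refine tendsto_eLpNorm_posPart_sub hp₁ hp
    (.of_forall fun ν => (hdistrib ν).aemeasurable_fst.aestronglyMeasurable)
    ((hdistrib μ).memLp_iff.2 <| memLp_of_linear_growth hf.measurable.aestronglyMeasurable hfK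
      (hM.memLp_id hp₀ hp hμ)) ?_ fun ε hε => ?_
  · refine hU.quasiMeasurePreserving.ae (ae_eventually_quantile_le _ fun x => ?_)
    simp only [Measure.map_apply hf.measurable measurableSet_Iio]
    exact ProbabilityMeasure.le_liminf_measure_open_of_tendsto
      (tendsto_id.mono_left nhdsWithin_le_nhds) (hf.isOpen_preimage x)
  · obtain ⟨C, hC⟩ := hM.exists_eventually_eLpNorm_posPart_sub_le hp₀ hp hμ
      (fun z => (le_abs_self _).trans (hfK z)) hε
    refine ⟨C, hC.mono fun ν hν => ?_⟩
    have hexcess : Measurable fun y : ℝ => (y - C)⁺ :=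
      (measurable_id.sub_const C).sup measurable_const
    exact ((hdistrib ν).comp hexcess).eLpNorm_eq p |>.trans_le hν

theorem upperSemicontinuousOn_risk [IsProbabilityMeasure P] (hP : AtomlessSpace P)
    [Fact (1 ≤ p)] (hp : p ≠ ⊤) {R : Lp ℝ p P → ℝ} (hconv : ConvexOn ℝ univ R)
    (hmono : Monotone R) (hM : LocUnifIntegrating p.toReal M) (hf : UpperSemicontinuous f)
    (hfK : ∀ z, |f z| ≤ K * (1 + ‖z‖)) {Q : ProbabilityMeasure (Fin s → ℝ) → ℝ}
    (hQ : ∀ μ ∈ M, ∀ Y : Lp ℝ p P, P.map Y = μ.toMeasure.map f → Q μ = R Y) :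
    UpperSemicontinuousOn Q M := by
  have hp₁ : 1 ≤ p := Fact.out
  obtain ⟨U, hU⟩ := exists_measurePreserving_uniform hP
  let Y (ν : ProbabilityMeasure (Fin s → ℝ)) : Ω → ℝ :=
    quantile (ν.toMeasure.map f) ∘ U
  have hdistrib (ν : ProbabilityMeasure (Fin s → ℝ)) : IdentDistrib (Y ν) f P ν :=
    identDistrib_quantile_comp hU ν.toMeasure hf.measurable.aemeasurable
  have hmem (ν : M) : MemLp (Y ν) p P := (hdistrib ν).memLp_iff.2 <|
    memLp_of_linear_growth hf.measurable.aestronglyMeasurable hfK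
      (hM.memLp_id (zero_lt_one.trans_le hp₁).ne' hp ν.2)
  have hQR (ν : M) : Q ν = R (hmem ν).toLp := hQ ν ν.2 _ <| by
    rw [Measure.map_congr (hmem ν).coeFn_toLp, (hdistrib ν).map_eq]
  intro μ hμ a ha
  have hlim := tendsto_eLpNorm_posPart_quantile_sub hU hp₁ hp hM hf hfK hμ
  rw [nhdsWithin_eq_map_subtype_coe hμ, tendsto_map'_iff] at hlim
  rw [nhdsWithin_eq_map_subtype_coe hμ, eventually_map]
  rw [hQR ⟨μ, hμ⟩] at ha
  filter_upwards [eventually_lt_of_tendsto_posPart_sub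
    (continuous_of_convexOn_of_monotone hconv hmono) hmono
    (tendsto_posPart_toLp_sub hmem (hmem ⟨μ, hμ⟩) hlim) ha] with ν hν
  rwa [hQR ν]

end Risk

section FourierMotzkin

lemma exists_between_of_forall_mem_finset_le {α : Type*} [LinearOrder α] [Nonempty α]
    {lo hi : Finset α} (h : ∀ a ∈ lo, ∀ b ∈ hi, a ≤ b) :
    ∃ r, (∀ a ∈ lo, a ≤ r) ∧ ∀ b ∈ hi, r ≤ b := by
  rcases lo.eq_empty_or_nonempty with rfl | hlo
  · obtain ⟨r, hr⟩ := Finset.exists_le (α := αᵒᵈ) hi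
    exact ⟨r, by simp, hr⟩
  · exact ⟨lo.max' hlo, lo.le_max', fun b hb => lo.max'_le _ _ fun a ha => h a ha b hb⟩

variable {𝕜 E F : Type*} [Field 𝕜] [LinearOrder 𝕜] [IsStrictOrderedRing 𝕜] [AddCommGroup E]
  [Module 𝕜 E] [AddCommGroup F] [Module 𝕜 F]

-- Nonnegative combinations of a constraint bounding `r` from below with one bounding it from above
-- that cancel `r` express that each lower bound is at most each upper bound.
lemma exists_forall_mem_finset_nonneg_iff (s : Finset (Module.Dual 𝕜 (E × 𝕜))) (x : E) :
    (∃ r, ∀ u ∈ s, 0 ≤ u (x, r)) ↔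
      (∀ u ∈ s, u (0, 1) = 0 → 0 ≤ u (x, 0)) ∧
        ∀ u ∈ s, ∀ v ∈ s, 0 < u (0, 1) → v (0, 1) < 0 →
          0 ≤ u (0, 1) * v (x, 0) - v (0, 1) * u (x, 0) := by
  have hsplit (u : Module.Dual 𝕜 (E × 𝕜)) (r : 𝕜) : u (x, r) = u (x, 0) + r * u (0, 1) := by
    rw [← smul_eq_mul, ← map_smul, ← map_add]
    simp
  constructor
  · rintro ⟨r, hr⟩
    refine ⟨fun u hu hu₀ => by simpa [hsplit u r, hu₀] using hr u hu, fun u hu v hv hu₀ hv₀ => ?_⟩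
    have h₁ := mul_nonneg hu₀.le (hr v hv)
    have h₂ := mul_nonneg (neg_nonneg.2 hv₀.le) (hr u hu)
    rw [hsplit] at h₁ h₂
    linarith
  · rintro ⟨hzero, hpair⟩
    obtain ⟨r, hlo, hhi⟩ := exists_between_of_forall_mem_finset_le
      (lo := {u ∈ s | 0 < u (0, 1)}.image fun u => -u (x, 0) / u (0, 1))
      (hi := {v ∈ s | v (0, 1) < 0}.image fun v => -v (x, 0) / v (0, 1)) <| by
        simp only [Finset.forall_mem_image, Finset.mem_filter, and_imp]
        intro u hu hu₀ v hv hv₀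
        rw [div_le_iff₀ hu₀, div_mul_eq_mul_div, le_div_iff_of_neg hv₀]
        linarith [hpair u hu v hv hu₀ hv₀]
    simp only [Finset.forall_mem_image, Finset.mem_filter, and_imp] at hlo hhi
    refine ⟨r, fun u hu => ?_⟩
    rw [hsplit]
    rcases lt_trichotomy (u (0, 1)) 0 with hu₀ | hu₀ | hu₀
    · linarith [(le_div_iff_of_neg hu₀).1 (hhi hu hu₀)]
    · simpa [hu₀] using hzero u hu hu₀
    · linarith [(div_le_iff₀ hu₀).1 (hlo hu hu₀)]

lemma dualFG_id_iff {C : PointedCone 𝕜 E} :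
    C.DualFG .id ↔ ∃ s : Finset (Module.Dual 𝕜 E), ∀ x, x ∈ C ↔ ∀ u ∈ s, 0 ≤ u x :=
  exists_congr fun _ => SetLike.ext_iff.trans <| forall_congr' fun _ => iff_comm

lemma dualFG_comap {C : PointedCone 𝕜 F} (hC : C.DualFG .id) (f : E →ₗ[𝕜] F) :
    (C.comap f).DualFG .id := by
  classical
  obtain ⟨s, hs⟩ := dualFG_id_iff.1 hC
  refine dualFG_id_iff.2 ⟨s.image fun u => u ∘ₗ f, fun x => ?_⟩
  rw [Finset.forall_mem_image]
  exact hs (f x)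

lemma dualFG_map_fst_of_prod_self {C : PointedCone 𝕜 (E × 𝕜)} (hC : C.DualFG .id) :
    (C.map (LinearMap.fst 𝕜 E 𝕜)).DualFG .id := by
  classical
  obtain ⟨s, hs⟩ := dualFG_id_iff.1 hC
  let ι := LinearMap.inl 𝕜 E 𝕜
  refine dualFG_id_iff.2 ⟨{u ∈ s | u (0, 1) = 0}.image (fun u => u ∘ₗ ι) ∪
    {w ∈ s ×ˢ s | 0 < w.1 (0, 1) ∧ w.2 (0, 1) < 0}.image
      (fun w => w.1 (0, 1) • w.2 ∘ₗ ι - w.2 (0, 1) • w.1 ∘ₗ ι), fun x => ?_⟩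
  have hmem : x ∈ C.map (LinearMap.fst 𝕜 E 𝕜) ↔ ∃ r, ∀ u ∈ s, 0 ≤ u (x, r) := by
    simp [PointedCone.mem_map, ← hs]
  rw [hmem, exists_forall_mem_finset_nonneg_iff, Finset.forall_mem_union, Finset.forall_mem_image,
    Finset.forall_mem_image]
  simp only [Finset.mem_filter, Finset.mem_product, and_imp, Prod.forall]
  exact and_congr .rfl ⟨fun h u v hu hv => h u hu v hv, fun h u hu v hv => h u v hu hv⟩

theorem dualFG_map_fst_of_prod_pi : ∀ {k : ℕ} {C : PointedCone 𝕜 (E × (Fin k → 𝕜))},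
    C.DualFG .id → (C.map (LinearMap.fst 𝕜 E (Fin k → 𝕜))).DualFG .id
  | 0, C, hC => by
    have hfst : C.map (LinearMap.fst 𝕜 E (Fin 0 → 𝕜)) = C.comap (LinearMap.inl 𝕜 E _) := by
      ext x
      simp [PointedCone.mem_map, Fin.exists_fin_zero_pi]
    exact hfst ▸ dualFG_comap hC _
  | k + 1, C, hC => by
    let e : (E × (Fin k → 𝕜)) × 𝕜 →ₗ[𝕜] E × (Fin (k + 1) → 𝕜) :=
      (LinearMap.fst 𝕜 E _ ∘ₗ LinearMap.fst 𝕜 _ 𝕜).prod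
        ((Fin.consLinearEquiv 𝕜 fun _ => 𝕜).toLinearMap ∘ₗ
          (LinearMap.snd 𝕜 _ 𝕜).prod (LinearMap.snd 𝕜 E _ ∘ₗ LinearMap.fst 𝕜 _ 𝕜))
    have hfst : ((C.comap e).map (LinearMap.fst 𝕜 _ 𝕜)).map (LinearMap.fst 𝕜 E _) =
        C.map (LinearMap.fst 𝕜 E _) := by
      ext x
      simpa [PointedCone.mem_map, e, Fin.exists_fin_succ_pi] using! exists_comm
    exact hfst ▸ dualFG_map_fst_of_prod_pi (dualFG_map_fst_of_prod_self (dualFG_comap hC e))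

end FourierMotzkin

section ParametricLinearProgramming

lemma lipschitzWith_finset_sup' {α ι : Type*} [PseudoMetricSpace α] {s : Finset ι}
    (hs : s.Nonempty) {f : ι → α → ℝ} {K : ι → ℝ≥0} (hf : ∀ i ∈ s, LipschitzWith (K i) (f i)) :
    LipschitzWith (s.sup K) fun x => s.sup' hs fun i => f i x :=
  .of_le_add_mul _ fun x y => Finset.sup'_le _ _ fun i hi =>
    ((hf i hi).weaken (Finset.le_sup hi)).le_add_mul x y |>.trans <| by
      gcongr
      exact Finset.le_sup' (fun i => f i y) hi

lemma exists_lipschitzWith_forall_mem_iff_le {E : Type*} [NormedAddCommGroup E]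
    [NormedSpace ℝ E] [FiniteDimensional ℝ E] {D : PointedCone ℝ (ℝ × E)} (hD : D.DualFG .id)
    (hup : (1, 0) ∈ D) {t₀ : E} (hne : ∃ r, (r, t₀) ∈ D) (hbdd : BddBelow {r | (r, t₀) ∈ D}) :
    ∃ (K : ℝ≥0) (V : E → ℝ), LipschitzWith K V ∧
      ∀ t, (∃ r, (r, t) ∈ D) → ∀ r, (r, t) ∈ D ↔ V t ≤ r := by
  classical
  obtain ⟨s, hs⟩ := dualFG_id_iff.1 hD
  have hsplit (u : Module.Dual ℝ (ℝ × E)) (r : ℝ) (t : E) : u (r, t) = r * u (1, 0) + u (0, t) := by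
    rw [← smul_eq_mul, ← map_smul, ← map_add]
    simp
  let active : Finset (Module.Dual ℝ (ℝ × E)) := {u ∈ s | 0 < u (1, 0)}
  have hzero {u} (hu : u ∈ s) (hu' : u ∉ active) : u (1, 0) = 0 :=
    ((hs _).1 hup u hu).antisymm' <| not_lt.1 fun h => hu' <| Finset.mem_filter.2 ⟨hu, h⟩
  have hactive : active.Nonempty := by
    by_contra! hempty
    obtain ⟨r₀, hr₀⟩ := hne
    obtain ⟨b, hb⟩ := hbdd
    have hmem : (b - 1, t₀) ∈ D := (hs _).2 fun u hu => by
      have hnonneg := (hs _).1 hr₀ u hu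
      rwa [hsplit, hzero hu (hempty ▸ Finset.notMem_empty u), mul_zero] at hnonneg ⊢
    linarith [hb hmem]
  let ℓ (u : Module.Dual ℝ (ℝ × E)) : E →L[ℝ] ℝ :=
    LinearMap.toContinuousLinearMap (-(u (1, 0))⁻¹ • u ∘ₗ LinearMap.inr ℝ ℝ E)
  have hℓ {u} (hu : u ∈ active) (r : ℝ) (t : E) : 0 ≤ u (r, t) ↔ ℓ u t ≤ r := by
    have hpos : 0 < u (1, 0) := (Finset.mem_filter.1 hu).2
    have hval : ℓ u t = -u (0, t) / u (1, 0) := by simp [ℓ, div_eq_inv_mul]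
    rw [hsplit, hval, div_le_iff₀ hpos, neg_le_iff_add_nonneg]
  refine ⟨active.sup fun u => ‖ℓ u‖₊, fun t => active.sup' hactive fun u => ℓ u t,
    lipschitzWith_finset_sup' hactive fun u _ => (ℓ u).lipschitz, fun t ⟨r₀, hr₀⟩ r => ?_⟩
  rw [hs, Finset.sup'_le_iff]
  refine ⟨fun h u hu => (hℓ hu r t).1 (h u (Finset.mem_filter.1 hu).1), fun h u hu => ?_⟩
  by_cases hu' : u ∈ active
  · exact (hℓ hu' r t).2 (h u hu')
  · have hnonneg := (hs _).1 hr₀ u hu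
    rwa [hsplit, hzero hu hu', mul_zero] at hnonneg ⊢

lemma exists_dualFG_forall_mem_iff_exists_mulVec_le {𝕜 ι : Type*} [Field 𝕜] [LinearOrder 𝕜]
    [IsStrictOrderedRing 𝕜] [Finite ι] {k : ℕ} (A : Matrix ι (Fin k) 𝕜) :
    ∃ D : PointedCone 𝕜 (ι → 𝕜), D.DualFG .id ∧ ∀ t, t ∈ D ↔ ∃ y, A *ᵥ y ≤ t := by
  classical
  cases nonempty_fintype ι
  let slack : (ι → 𝕜) × (Fin k → 𝕜) →ₗ[𝕜] ι → 𝕜 :=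
    LinearMap.fst 𝕜 _ _ - A.mulVecLin ∘ₗ LinearMap.snd 𝕜 _ _
  have hpositive : (PointedCone.positive 𝕜 (ι → 𝕜)).DualFG .id :=
    dualFG_id_iff.2 ⟨Finset.univ.image fun i => LinearMap.proj i, by simp [Pi.le_def]⟩
  exact ⟨_, dualFG_map_fst_of_prod_pi (dualFG_comap hpositive slack),
    by simp [PointedCone.mem_map, slack]⟩

lemma fromRows_replicateRow_mulVec_le_sumElim_iff {𝕜 ι κ : Type*} [NonUnitalNonAssocSemiring 𝕜]
    [LE 𝕜] [Fintype κ] {A : Matrix ι κ 𝕜} {d y : κ → 𝕜} {t : ι → 𝕜} {r : 𝕜} :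
    fromRows A (replicateRow Unit d) *ᵥ y ≤ Sum.elim t (fun _ => r) ↔
      A *ᵥ y ≤ t ∧ d ⬝ᵥ y ≤ r :=
  Sum.forall.trans <| and_congr .rfl ⟨fun h => h (), fun h _ => h⟩

-- The epigraph of the optimal value is a projection of a polyhedral cone, hence one itself.
theorem exists_lipschitzWith_isLeast_dotProduct_image {ι : Type*} [Fintype ι] {k : ℕ}
    (A : Matrix ι (Fin k) ℝ) (d : Fin k → ℝ) {t₀ : ι → ℝ} (hne : {y | A *ᵥ y ≤ t₀}.Nonempty)
    (hbdd : BddBelow ((d ⬝ᵥ ·) '' {y | A *ᵥ y ≤ t₀})) :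
    ∃ (K : ℝ≥0) (V : (ι → ℝ) → ℝ), LipschitzWith K V ∧
      ∀ t, {y | A *ᵥ y ≤ t}.Nonempty → IsLeast ((d ⬝ᵥ ·) '' {y | A *ᵥ y ≤ t}) (V t) := by
  obtain ⟨D, hD, hDmem⟩ :=
    exists_dualFG_forall_mem_iff_exists_mulVec_le (fromRows A (replicateRow Unit d))
  let e : ℝ × (ι → ℝ) →ₗ[ℝ] ι ⊕ Unit → ℝ :=
    LinearMap.pi (Sum.elim (fun i => LinearMap.proj i ∘ₗ LinearMap.snd ℝ ℝ _)
      fun _ => LinearMap.fst ℝ ℝ _)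
  have he (r : ℝ) (t : ι → ℝ) : e (r, t) = Sum.elim t fun _ => r := by
    ext (i | i) <;> rfl
  have hmem (r : ℝ) (t : ι → ℝ) : (r, t) ∈ D.comap e ↔ ∃ y, A *ᵥ y ≤ t ∧ d ⬝ᵥ y ≤ r := by
    rw [PointedCone.mem_comap, he, hDmem]
    exact exists_congr fun _ => fromRows_replicateRow_mulVec_le_sumElim_iff
  obtain ⟨K, V, hV, hVmem⟩ := exists_lipschitzWith_forall_mem_iff_le (dualFG_comap hD e)
    (t₀ := t₀) ((hmem 1 0).2 ⟨0, by simp⟩)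
    (hne.elim fun y hy => ⟨d ⬝ᵥ y, (hmem _ _).2 ⟨y, hy, le_rfl⟩⟩)
    (hbdd.imp fun b hb r hr => by
      obtain ⟨y, hy, hyr⟩ := (hmem r t₀).1 hr
      exact (hb (mem_image_of_mem _ hy)).trans hyr)
  refine ⟨K, V, hV, fun t ⟨y₀, hy₀⟩ => ?_⟩
  have hle (r : ℝ) : (∃ y, A *ᵥ y ≤ t ∧ d ⬝ᵥ y ≤ r) ↔ V t ≤ r :=
    (hmem r t).symm.trans (hVmem t ⟨d ⬝ᵥ y₀, (hmem _ _).2 ⟨y₀, hy₀, le_rfl⟩⟩ r)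
  have hlower : V t ∈ lowerBounds ((d ⬝ᵥ ·) '' {y | A *ᵥ y ≤ t}) :=
    forall_mem_image.2 fun y hy => (hle _).1 ⟨y, hy, le_rfl⟩
  obtain ⟨y, hy, hyV⟩ := (hle (V t)).2 le_rfl
  exact ⟨⟨y, hy, hyV.antisymm (hlower (mem_image_of_mem _ hy))⟩, hlower⟩

lemma psi_eq_setOf_fromRows_mulVec_le {n m s : ℕ} {d : Fin m → ℝ} {A : Matrix (Fin s) (Fin m) ℝ}
    {T : Matrix (Fin s) (Fin n) ℝ} {x : Fin n → ℝ} {z : Fin s → ℝ} {v : ℝ}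
    (hv : IsLeast ((d ⬝ᵥ ·) '' LowerFeas A T x z) v) :
    Psi d A T x z =
      {y | fromRows A (replicateRow Unit d) *ᵥ y ≤ Sum.elim (T *ᵥ x + z) fun _ => v} := by
  obtain ⟨⟨y₀, hy₀, rfl⟩, hlower⟩ := hv
  ext y
  refine Iff.trans (and_congr_right fun _ => ?_)
    fromRows_replicateRow_mulVec_le_sumElim_iff.symm
  exact ⟨fun hy => hy y₀ hy₀, fun hy y' hy' => hy.trans (hlower (mem_image_of_mem _ hy'))⟩

end ParametricLinearProgramming

section BilevelValue

variable {n m s : ℕ} {c : Fin n → ℝ} {q d : Fin m → ℝ} {A : Matrix (Fin s) (Fin m) ℝ}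
  {T : Matrix (Fin s) (Fin n) ℝ}

-- With the lower level value `v`, the lower level solutions form the feasible set of another
-- linear program with right-hand side `(T x + z, v)`.
theorem exists_lipschitzWith_isLeast_image_psi (hP : Pfeas A T = univ) {x₀ : Fin n → ℝ}
    {z₀ : Fin s → ℝ} (hne : (Psi d A T x₀ z₀).Nonempty)
    (hbdd : BddBelow ((q ⬝ᵥ ·) '' Psi d A T x₀ z₀)) :
    ∃ (K : ℝ≥0) (g : (Fin s → ℝ) → ℝ), LipschitzWith K g ∧
      ∀ x z, IsLeast ((q ⬝ᵥ ·) '' Psi d A T x z) (g (T *ᵥ x + z)) := by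
  have hfeas (x z) : (LowerFeas A T x z).Nonempty := (eq_univ_iff_forall.1 hP) (x, z)
  have hdbdd : BddBelow ((d ⬝ᵥ ·) '' LowerFeas A T x₀ z₀) :=
    hne.elim fun y hy => ⟨d ⬝ᵥ y, forall_mem_image.2 hy.2⟩
  obtain ⟨K₁, v, hv, hvleast⟩ :=
    exists_lipschitzWith_isLeast_dotProduct_image A d (hfeas x₀ z₀) hdbdd
  have hPsi (x z) : Psi d A T x z = _ :=
    psi_eq_setOf_fromRows_mulVec_le (hvleast _ (hfeas x z))
  have hPsi_ne (x z) : (Psi d A T x z).Nonempty :=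
    let ⟨⟨y, hy, hyv⟩, hlower⟩ := hvleast _ (hfeas x z)
    ⟨y, hy, fun y' hy' => hyv.trans_le (hlower (mem_image_of_mem _ hy'))⟩
  obtain ⟨K₂, w, hw, hwleast⟩ := exists_lipschitzWith_isLeast_dotProduct_image _ q
    (hPsi x₀ z₀ ▸ hne) (hPsi x₀ z₀ ▸ hbdd)
  have hext : LipschitzWith (max 1 K₁) fun t => (Sum.elim t fun _ => v t : Fin s ⊕ Unit → ℝ) :=
    .of_dist_le_mul fun t t' => (dist_pi_le_iff (by positivity)).2 <| Sum.forall.2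
      ⟨fun i => (dist_le_pi_dist t t' i).trans <|
          le_mul_of_one_le_left dist_nonneg (le_max_left _ _),
        fun _ => (hv.weaken (le_max_right _ _)).dist_le_mul t t'⟩
  refine ⟨_, _, hw.comp hext, fun x z => ?_⟩
  rw [hPsi x z]
  exact hwleast _ (hPsi x z ▸ hPsi_ne x z)

lemma exists_lipschitzWith_fE_eq (hdom : (domf c q d A T).Nonempty) (hP : Pfeas A T = univ) :
    ∃ (K : ℝ≥0) (g : (Fin s → ℝ) → ℝ), LipschitzWith K g ∧
      ∀ x z, fE c q d A T x z = ((c ⬝ᵥ x + g (T *ᵥ x + z) : ℝ) : EReal) := by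
  obtain ⟨⟨x₀, z₀⟩, htop, hbot⟩ := hdom
  have hne : (Psi d A T x₀ z₀).Nonempty := by
    contrapose! htop
    simp [fE, htop]
  have hbdd : BddBelow ((q ⬝ᵥ ·) '' Psi d A T x₀ z₀) :=
    ⟨EReal.toReal _, forall_mem_image.2 fun y hy => EReal.toReal_le_toReal
      (sInf_le <| mem_image_of_mem (fun y => ((q ⬝ᵥ y : ℝ) : EReal)) hy)
      (fun h => hbot <| by simp [fE, h]) (EReal.coe_ne_top _)⟩
  obtain ⟨K, g, hg, hleast⟩ := exists_lipschitzWith_isLeast_image_psi hP hne hbdd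
  refine ⟨K, g, hg, fun x z => ?_⟩
  have hcoe := EReal.coe_strictMono.map_isLeast.2 (hleast x z)
  rw [image_image] at hcoe
  rw [fE, hcoe.csInf_eq, EReal.coe_add]

lemma continuous_toReal_fE (hdom : (domf c q d A T).Nonempty) (hP : Pfeas A T = univ)
    (x : Fin n → ℝ) : Continuous fun z => (fE c q d A T x z).toReal := by
  obtain ⟨K, g, hg, hfE⟩ := exists_lipschitzWith_fE_eq hdom hP
  simp only [hfE, EReal.toReal_coe]
  exact continuous_const.add (hg.continuous.comp (continuous_const_add _))

lemma exists_abs_toReal_fE_le (hdom : (domf c q d A T).Nonempty) (hP : Pfeas A T = univ)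
    (x : Fin n → ℝ) : ∃ K : ℝ≥0, ∀ z, |(fE c q d A T x z).toReal| ≤ K * (1 + ‖z‖) := by
  obtain ⟨K, g, hg, hfE⟩ := exists_lipschitzWith_fE_eq hdom hP
  refine ⟨max ‖c ⬝ᵥ x + g (T *ᵥ x)‖₊ K, fun z => ?_⟩
  simp only [hfE, EReal.toReal_coe]
  have hdist := hg.dist_le_mul (T *ᵥ x + z) (T *ᵥ x)
  rw [Real.dist_eq, dist_self_add_left] at hdist
  calc |c ⬝ᵥ x + g (T *ᵥ x + z)|
      = |(c ⬝ᵥ x + g (T *ᵥ x)) + (g (T *ᵥ x + z) - g (T *ᵥ x))| := by ring_nf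
    _ ≤ |c ⬝ᵥ x + g (T *ᵥ x)| + K * ‖z‖ := (abs_add_le _ _).trans (by gcongr)
    _ ≤ max |c ⬝ᵥ x + g (T *ᵥ x)| K * 1 + max |c ⬝ᵥ x + g (T *ᵥ x)| K * ‖z‖ := by
      rw [mul_one]
      gcongr
      exacts [le_max_left _ _, le_max_right _ _]
    _ = _ := by simp [mul_add]

end BilevelValue

theorem optimalValue_upper_semicontinuous_general {α Ω : Type*} [MeasurableSpace Ω]
    {P : Measure Ω} [IsProbabilityMeasure P] (hP : AtomlessSpace P) {p : ℝ≥0∞} [Fact (1 ≤ p)]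
    (hp : p ≠ ⊤) {R : Lp ℝ p P → ℝ} (hconv : ConvexOn ℝ univ R) (hmono : Monotone R) {s : ℕ}
    {M : Set (ProbabilityMeasure (Fin s → ℝ))} (hM : LocUnifIntegrating p.toReal M) {X : Set α}
    {f : α → (Fin s → ℝ) → ℝ} (hf : ∀ x ∈ X, UpperSemicontinuous (f x))
    (hfK : ∀ x ∈ X, ∃ K : ℝ≥0, ∀ z, |f x z| ≤ K * (1 + ‖z‖))
    {Q : α → ProbabilityMeasure (Fin s → ℝ) → ℝ}
    (hQ : ∀ x ∈ X, ∀ μ ∈ M, ∀ Y : Lp ℝ p P, P.map Y = μ.toMeasure.map (f x) → Q x μ = R Y) :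
    UpperSemicontinuousOn (fun μ => ⨅ x ∈ X, ((Q x μ : ℝ) : EReal)) M := by
  refine upperSemicontinuousOn_biInf fun x hx => ?_
  obtain ⟨K, hK⟩ := hfK x hx
  have hrisk := upperSemicontinuousOn_risk hP hp hconv hmono hM (hf x hx) hK (hQ x hx)
  exact continuous_coe_real_ereal.comp_upperSemicontinuousOn hrisk EReal.coe_strictMono.monotone

theorem optimalValue_upper_semicontinuous {n m s : ℕ}
    (c : Fin n → ℝ) (q d : Fin m → ℝ)
    (A : Matrix (Fin s) (Fin m) ℝ) (T : Matrix (Fin s) (Fin n) ℝ)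
    (hdom : (domf c q d A T).Nonempty) (hP : Pfeas A T = Set.univ)
    {Ω : Type*} [MeasureSpace Ω] [IsProbabilityMeasure (volume : Measure Ω)]
    (hatomless : AtomlessSpace (volume : Measure Ω))
    (p : ℝ≥0∞) [hp1 : Fact (1 ≤ p)] (hptop : p ≠ ⊤)
    (R : Lp ℝ p (volume : Measure Ω) → ℝ)
    (hLI : ∀ Y₁ Y₂ : Lp ℝ p (volume : Measure Ω),
      Measure.map (Y₁ : Ω → ℝ) volume = Measure.map (Y₂ : Ω → ℝ) volume → R Y₁ = R Y₂)
    (hconv : ConvexOn ℝ Set.univ R)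
    (hmono : ∀ Y₁ Y₂ : Lp ℝ p (volume : Measure Ω),
      (Y₁ : Ω → ℝ) ≤ᵐ[volume] (Y₂ : Ω → ℝ) → R Y₁ ≤ R Y₂)
    (X : Set (Fin n → ℝ)) (hXpoly : IsPolyhedron X) (hXne : X.Nonempty)
    (M : Set (ProbabilityMeasure (Fin s → ℝ)))
    (hMmom : ∀ μ ∈ M,
      ∫⁻ z, ENNReal.ofReal (‖z‖ ^ p.toReal) ∂(μ : Measure (Fin s → ℝ)) < ⊤)
    (hLUI : LocUnifIntegrating p.toReal M)
    (Q : (Fin n → ℝ) → ProbabilityMeasure (Fin s → ℝ) → ℝ)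
    (hQ : ∀ x μ, μ ∈ M → ∀ Y : Lp ℝ p (volume : Measure Ω),
      Measure.map (Y : Ω → ℝ) volume
        = Measure.map (fun z => (fE c q d A T x z).toReal) (μ : Measure (Fin s → ℝ)) →
      Q x μ = R Y)
    (φ : ProbabilityMeasure (Fin s → ℝ) → EReal)
    (hφ : ∀ μ, φ μ = ⨅ x ∈ X, ((Q x μ : ℝ) : EReal)) :
    UpperSemicontinuousOn φ M := by
  rw [show φ = _ from funext hφ]
  exact optimalValue_upper_semicontinuous_general hatomless hptop hconv
    (fun Y₁ Y₂ h => hmono Y₁ Y₂ ((Lp.coeFn_le Y₁ Y₂).2 h)) hLUI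
    (fun x _ => (continuous_toReal_fE hdom hP x).upperSemicontinuous)
    (fun x _ => exists_abs_toReal_fE_le hdom hP x) fun x _ => hQ x
end
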